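/- arXiv:2404.07661 — 9 statements merged into one kernel-verified Lean document; each statement's English description precedes it below -/
import Mathlib

section
/- Let (X, μ) be a measurable space with a finite measure μ, let f₀, f₁ : X → [0,∞) be measurable with ∫ f₀ dμ = ∫ f₁ dμ = 1, and fix π ∈ (0,1). Let M : ℝ × ℝ × ℝ → ℝ be continuously differentiable such that the partial derivatives ∂₁M(p,q,π) and ∂₂M(p,q,π) are strictly positive for all p, q ∈ [0,1]. For a measurable φ : X → [0,1] set S(φ) = ∫ φ f₁ dμ, T(φ) = ∫ (1−φ) f₀ dμ and U(φ) = M(S(φ), T(φ), π). If φ* maximizes U over all measurable functions φ : X → [0,1], then, setting δ* = ∂₂M(S(φ*),T(φ*),π) / ∂₁M(S(φ*),T(φ*),π), one has φ*(x) = 1 for μ-almost every x with f₁(x) > δ* f₀(x), and φ*(x) = 0 for μ-almost every x with f₁(x) < δ* f₀(x). -/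
open MeasureTheory Set

theorem bayes_classifier_threshold
    {X : Type*} [MeasurableSpace X] (μ : Measure X) [IsFiniteMeasure μ]
    (f₀ f₁ : X → ℝ) (hf₀m : Measurable f₀) (hf₁m : Measurable f₁)
    (hf₀0 : ∀ x, 0 ≤ f₀ x) (hf₁0 : ∀ x, 0 ≤ f₁ x)
    (hf₀1 : ∫ x, f₀ x ∂μ = 1) (hf₁1 : ∫ x, f₁ x ∂μ = 1)
    (π : ℝ) (hπ : π ∈ Ioo (0:ℝ) 1)
    (M : ℝ × ℝ × ℝ → ℝ) (hM : ContDiff ℝ 1 M)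
    (hM1 : ∀ p q : ℝ, p ∈ Icc (0:ℝ) 1 → q ∈ Icc (0:ℝ) 1 →
      0 < fderiv ℝ M (p, q, π) (1, 0, 0))
    (hM2 : ∀ p q : ℝ, p ∈ Icc (0:ℝ) 1 → q ∈ Icc (0:ℝ) 1 →
      0 < fderiv ℝ M (p, q, π) (0, 1, 0))
    (S T : (X → ℝ) → ℝ)
    (hS : ∀ φ : X → ℝ, S φ = ∫ x, φ x * f₁ x ∂μ)
    (hT : ∀ φ : X → ℝ, T φ = ∫ x, (1 - φ x) * f₀ x ∂μ)
    (U : (X → ℝ) → ℝ) (hU : ∀ φ : X → ℝ, U φ = M (S φ, T φ, π))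
    (φstar : X → ℝ) (hφstarm : Measurable φstar)
    (hφstar01 : ∀ x, φstar x ∈ Icc (0:ℝ) 1)
    (hmax : ∀ φ : X → ℝ, Measurable φ → (∀ x, φ x ∈ Icc (0:ℝ) 1) → U φ ≤ U φstar)
    (δstar : ℝ)
    (hδ : δstar = fderiv ℝ M (S φstar, T φstar, π) (0, 1, 0) /
                  fderiv ℝ M (S φstar, T φstar, π) (1, 0, 0)) :
    (∀ᵐ x ∂μ, f₁ x > δstar * f₀ x → φstar x = 1) ∧
    (∀ᵐ x ∂μ, f₁ x < δstar * f₀ x → φstar x = 0) := by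
  have hi0 : Integrable f₀ μ := by
    by_contra h
    rw [integral_undef h] at hf₀1
    norm_num at hf₀1
  have hi1 : Integrable f₁ μ := by
    by_contra h
    rw [integral_undef h] at hf₁1
    norm_num at hf₁1
  -- bounded measurable times integrable
  have hmul : ∀ (g f : X → ℝ), Measurable g → (∀ x, |g x| ≤ 1) → Integrable f μ →
      Integrable (fun x => g x * f x) μ := by
    intro g f hg hb hf
    exact hf.bdd_mul hg.aestronglyMeasurable (c := 1)
      (Filter.Eventually.of_forall fun x => by simpa using hb x)
  have hb1 : ∀ x, |φstar x| ≤ 1 := fun x => by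
    have := hφstar01 x
    rw [abs_le]; constructor <;> linarith [this.1, this.2]
  have hb2 : ∀ x, |1 - φstar x| ≤ 1 := fun x => by
    have := hφstar01 x
    rw [abs_le]; constructor <;> linarith [this.1, this.2]
  have hSI := hmul φstar f₁ hφstarm hb1 hi1
  have hTI := hmul (fun x => 1 - φstar x) f₀ (measurable_const.sub hφstarm) hb2 hi0
  have hSmem : S φstar ∈ Icc (0:ℝ) 1 := by
    rw [hS]
    refine ⟨integral_nonneg fun x => mul_nonneg (hφstar01 x).1 (hf₁0 x), ?_⟩
    rw [← hf₁1]
    exact integral_mono hSI hi1 fun x => by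
      simpa using mul_le_mul_of_nonneg_right (hφstar01 x).2 (hf₁0 x)
  have hTmem : T φstar ∈ Icc (0:ℝ) 1 := by
    rw [hT]
    refine ⟨integral_nonneg fun x =>
      mul_nonneg (sub_nonneg.2 (hφstar01 x).2) (hf₀0 x), ?_⟩
    refine (integral_mono hTI hi0 fun x => ?_).trans hf₀1.le
    have := mul_nonneg (hφstar01 x).1 (hf₀0 x)
    show (1 - φstar x) * f₀ x ≤ f₀ x
    linarith
  have ha := hM1 _ _ hSmem hTmem
  set a := fderiv ℝ M (S φstar, T φstar, π) (1, 0, 0) with ha_def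
  set b := fderiv ℝ M (S φstar, T φstar, π) (0, 1, 0) with hb_def
  have hbδ : b = a * δstar := by rw [hδ]; field_simp
  -- the competitor
  let E : Set X := {x | δstar * f₀ x < f₁ x}
  have hE : MeasurableSet E := measurableSet_lt (hf₀m.const_mul _) hf₁m
  let ψ : X → ℝ := E.indicator (fun _ => 1)
  have hψm : Measurable ψ := measurable_const.indicator hE
  have hψ1 : ∀ x, δstar * f₀ x < f₁ x → ψ x = 1 := fun x hx =>
    Set.indicator_of_mem (show x ∈ E from hx) _
  have hψ0 : ∀ x, ¬ δstar * f₀ x < f₁ x → ψ x = 0 := fun x hx =>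
    Set.indicator_of_notMem (show x ∉ E from hx) _
  have hψ01 : ∀ x, ψ x ∈ Icc (0:ℝ) 1 := by
    intro x
    by_cases hx : δstar * f₀ x < f₁ x
    · rw [hψ1 x hx]; simp
    · rw [hψ0 x hx]; simp
  have hdm : Measurable (fun x => ψ x - φstar x) := hψm.sub hφstarm
  have hdb : ∀ x, |ψ x - φstar x| ≤ 1 := fun x => by
    have h1 := hφstar01 x
    have h2 := hψ01 x
    rw [abs_le]; constructor <;> linarith [h1.1, h1.2, h2.1, h2.2]
  have hAI := hmul _ f₁ hdm hdb hi1
  have hBI := hmul _ f₀ hdm hdb hi0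
  set A := ∫ x, (ψ x - φstar x) * f₁ x ∂μ with hA
  set B := ∫ x, (ψ x - φstar x) * f₀ x ∂μ with hB
  have hSt : ∀ t : ℝ, S (fun x => φstar x + t * (ψ x - φstar x)) = S φstar + t * A := by
    intro t
    rw [hS, hS, hA, ← integral_const_mul, ← integral_add hSI (hAI.const_mul t)]
    congr 1; ext x; ring
  have hTt : ∀ t : ℝ, T (fun x => φstar x + t * (ψ x - φstar x)) = T φstar - t * B := by
    intro t
    rw [hT, hT, hB, ← integral_const_mul, ← integral_sub hTI (hBI.const_mul t)]
    congr 1; ext x; ring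
  have hder : HasDerivAt (fun t : ℝ => M (S φstar + t * A, T φstar - t * B, π))
      (a * A - b * B) 0 := by
    have h1 : HasDerivAt (fun t : ℝ => S φstar + t * A) A 0 := by
      simpa using ((hasDerivAt_id (0:ℝ)).mul_const A).const_add (S φstar)
    have h2 : HasDerivAt (fun t : ℝ => T φstar - t * B) (-B) 0 := by
      simpa using ((hasDerivAt_id (0:ℝ)).mul_const B).const_sub (T φstar)
    have h3 := h1.prodMk (h2.prodMk (hasDerivAt_const (0:ℝ) π))
    have h4 : HasFDerivAt M (fderiv ℝ M (S φstar, T φstar, π))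
        ((fun t : ℝ => (S φstar + t * A, T φstar - t * B, π)) 0) := by
      have := ((hM.differentiable one_ne_zero) (S φstar, T φstar, π)).hasFDerivAt
      simpa using this
    have h5 := h4.comp_hasDerivAt (0:ℝ) h3
    have h6 : fderiv ℝ M (S φstar, T φstar, π) (A, -B, 0) = a * A - b * B := by
      have : ((A, -B, 0) : ℝ × ℝ × ℝ) = A • (1, 0, 0) + (-B) • (0, 1, 0) := by
        simp
      rw [this, map_add, map_smul, map_smul, ← ha_def, ← hb_def]
      simp only [smul_eq_mul]
      ring
    rw [h6] at h5
    exact h5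
  have hle : a * A - b * B ≤ 0 := by
    have ht := hder.tendsto_slope_zero_right
    refine le_of_tendsto ht ?_
    filter_upwards [Ioo_mem_nhdsGT (zero_lt_one (α := ℝ))] with t ht
    have h := hmax (fun x => φstar x + t * (ψ x - φstar x))
      (hφstarm.add (hdm.const_mul t)) (fun x => by
        have h1 := hφstar01 x
        have h2 := hψ01 x
        have e1 := mul_nonneg ht.1.le h2.1
        have e2 := mul_nonneg (sub_nonneg.2 ht.2.le) h1.1
        have e3 := mul_nonneg ht.1.le (sub_nonneg.2 h2.2)
        have e4 := mul_nonneg (sub_nonneg.2 ht.2.le) (sub_nonneg.2 h1.2)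
        constructor <;> nlinarith)
    rw [hU, hU, hSt, hTt] at h
    have := mul_nonneg (inv_nonneg.2 ht.1.le) (sub_nonneg.2 h)
    simp only [zero_add, zero_mul, add_zero, sub_zero, smul_eq_mul]
    linarith
  have hnn : ∀ x, 0 ≤ (ψ x - φstar x) * (f₁ x - δstar * f₀ x) := by
    intro x
    by_cases hx : δstar * f₀ x < f₁ x
    · rw [hψ1 x hx]
      exact mul_nonneg (sub_nonneg.2 (hφstar01 x).2) (sub_nonneg.2 hx.le)
    · rw [hψ0 x hx]
      exact mul_nonneg_of_nonpos_of_nonpos (by linarith [(hφstar01 x).1]) (by linarith)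
  have heq : (fun x => (ψ x - φstar x) * (f₁ x - δstar * f₀ x)) =
      fun x => (ψ x - φstar x) * f₁ x - δstar * ((ψ x - φstar x) * f₀ x) := by
    ext x; ring
  have hDI : Integrable (fun x => (ψ x - φstar x) * (f₁ x - δstar * f₀ x)) μ := by
    rw [heq]; exact hAI.sub (hBI.const_mul _)
  have hint : ∫ x, (ψ x - φstar x) * (f₁ x - δstar * f₀ x) ∂μ = A - δstar * B := by
    rw [heq, integral_sub hAI (hBI.const_mul _), integral_const_mul]
  have hzero : ∫ x, (ψ x - φstar x) * (f₁ x - δstar * f₀ x) ∂μ = 0 := by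
    refine le_antisymm ?_ (integral_nonneg hnn)
    rw [hint]
    have : a * (A - δstar * B) ≤ 0 := by rw [hbδ] at hle; linarith
    by_contra hc
    exact absurd (mul_pos ha (not_le.1 hc)) (not_lt.2 this)
  have hae := (integral_eq_zero_iff_of_nonneg hnn hDI).1 hzero
  constructor
  · filter_upwards [hae] with x hx h
    rcases mul_eq_zero.1 hx with h' | h'
    · rw [hψ1 x h] at h'; linarith
    · linarith
  · filter_upwards [hae] with x hx h
    rcases mul_eq_zero.1 hx with h' | h'
    · rw [hψ0 x (not_lt.2 h.le)] at h'; linarith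
    · linarith
end

section
/- Let M_Y(p,q,π) = (√(pq) − √((1−p)(1−q))) / (√(pq) + √((1−p)(1−q))) (Yule's coefficient of colligation, which does not depend on π). Then for all p, q ∈ (0,1), the ratio of partial derivatives satisfies ∂_q M_Y(p,q,π) / ∂_p M_Y(p,q,π) = p(1−p) / (q(1−q)); in particular this ratio coincides with the corresponding ratio for Yule's coefficient of association. -/
open Set

lemma yuleY_deriv_fst (p q : ℝ) (hp : p ∈ Ioo (0:ℝ) 1) (hq : q ∈ Ioo (0:ℝ) 1) :
    HasDerivAt (fun x : ℝ => (Real.sqrt (x * q) - Real.sqrt ((1 - x) * (1 - q))) /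
      (Real.sqrt (x * q) + Real.sqrt ((1 - x) * (1 - q))))
      (q * (1 - q) / (Real.sqrt (p * q) * Real.sqrt ((1 - p) * (1 - q)) *
        (Real.sqrt (p * q) + Real.sqrt ((1 - p) * (1 - q))) ^ 2)) p := by
  obtain ⟨hp0, hp1⟩ := hp
  obtain ⟨hq0, hq1⟩ := hq
  have hA : 0 < p * q := mul_pos hp0 hq0
  have hB : 0 < (1 - p) * (1 - q) := mul_pos (by linarith) (by linarith)
  have h1 : HasDerivAt (fun x : ℝ => x * q) (1 * q) p := (hasDerivAt_id p).mul_const q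
  have h2 : HasDerivAt (fun x : ℝ => (1 - x) * (1 - q)) (-1 * (1 - q)) p :=
    ((hasDerivAt_id p).const_sub 1).mul_const (1 - q)
  have h3 := h1.sqrt hA.ne'
  have h4 := h2.sqrt hB.ne'
  have ha := Real.sqrt_pos.mpr hA
  have hb := Real.sqrt_pos.mpr hB
  have ha2 := Real.sq_sqrt hA.le
  have hb2 := Real.sq_sqrt hB.le
  have h5 := (h3.sub h4).div (h3.add h4) (add_pos ha hb).ne'
  refine h5.congr_deriv ?_
  simp only [Pi.add_apply, Pi.sub_apply]
  generalize Real.sqrt (p * q) = a at *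
  generalize Real.sqrt ((1 - p) * (1 - q)) = b at *
  have hab : a + b ≠ 0 := (add_pos ha hb).ne'
  field_simp
  linear_combination (2 * (1 - q)) * ha2 + (2 * q) * hb2

lemma yuleQ_deriv_fst (p q : ℝ) (hp : p ∈ Ioo (0:ℝ) 1) (hq : q ∈ Ioo (0:ℝ) 1) :
    HasDerivAt (fun x : ℝ => (x * q - (1 - x) * (1 - q)) / (x * q + (1 - x) * (1 - q)))
      (2 * (q * (1 - q)) / (p * q + (1 - p) * (1 - q)) ^ 2) p := by
  obtain ⟨hp0, hp1⟩ := hp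
  obtain ⟨hq0, hq1⟩ := hq
  have hA : 0 < p * q := mul_pos hp0 hq0
  have hB : 0 < (1 - p) * (1 - q) := mul_pos (by linarith) (by linarith)
  have h1 : HasDerivAt (fun x : ℝ => x * q) (1 * q) p := (hasDerivAt_id p).mul_const q
  have h2 : HasDerivAt (fun x : ℝ => (1 - x) * (1 - q)) (-1 * (1 - q)) p :=
    ((hasDerivAt_id p).const_sub 1).mul_const (1 - q)
  have h5 := (h1.sub h2).div (h1.add h2) (add_pos hA hB).ne'
  refine h5.congr_deriv ?_
  simp only [Pi.add_apply, Pi.sub_apply]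
  congr 1
  ring

theorem yule_Y_partial_ratio
    (MY MQ : ℝ → ℝ → ℝ → ℝ)
    (hMY : ∀ p q π : ℝ, MY p q π =
      (Real.sqrt (p * q) - Real.sqrt ((1 - p) * (1 - q))) /
      (Real.sqrt (p * q) + Real.sqrt ((1 - p) * (1 - q))))
    (hMQ : ∀ p q π : ℝ, MQ p q π =
      (p * q - (1 - p) * (1 - q)) / (p * q + (1 - p) * (1 - q))) :
    ∀ p q π : ℝ, p ∈ Ioo (0:ℝ) 1 → q ∈ Ioo (0:ℝ) 1 →
      deriv (fun q' => MY p q' π) q / deriv (fun p' => MY p' q π) p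
          = p * (1 - p) / (q * (1 - q)) ∧
      deriv (fun q' => MY p q' π) q / deriv (fun p' => MY p' q π) p
          = deriv (fun q' => MQ p q' π) q / deriv (fun p' => MQ p' q π) p := by
  intro p q π hp hq
  have hY1 := ((yuleY_deriv_fst p q hp hq).congr_of_eventuallyEq
    (Filter.Eventually.of_forall fun x => hMY x q π)).deriv
  have hY2 := ((yuleY_deriv_fst q p hq hp).congr_of_eventuallyEq
    (f₁ := fun q' => MY p q' π) (Filter.Eventually.of_forall fun x => by
      beta_reduce
      rw [hMY, mul_comm p x, mul_comm (1 - p) (1 - x)])).deriv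
  have hQ1 := ((yuleQ_deriv_fst p q hp hq).congr_of_eventuallyEq
    (Filter.Eventually.of_forall fun x => hMQ x q π)).deriv
  have hQ2 := ((yuleQ_deriv_fst q p hq hp).congr_of_eventuallyEq
    (f₁ := fun q' => MQ p q' π) (Filter.Eventually.of_forall fun x => by
      beta_reduce
      rw [hMQ, mul_comm p x, mul_comm (1 - p) (1 - x)])).deriv
  rw [hY1, hY2, hQ1, hQ2, mul_comm q p, mul_comm (1 - q) (1 - p)]
  obtain ⟨hp0, hp1⟩ := hp
  obtain ⟨hq0, hq1⟩ := hq
  have hA : 0 < p * q := mul_pos hp0 hq0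
  have hB : 0 < (1 - p) * (1 - q) := mul_pos (by linarith) (by linarith)
  have ha := Real.sqrt_pos.mpr hA
  have hb := Real.sqrt_pos.mpr hB
  have hD : 0 < Real.sqrt (p * q) * Real.sqrt ((1 - p) * (1 - q)) *
        (Real.sqrt (p * q) + Real.sqrt ((1 - p) * (1 - q))) ^ 2 := by positivity
  have hE : 0 < (p * q + (1 - p) * (1 - q)) ^ 2 := by positivity
  rw [div_div_div_cancel_right₀ hD.ne', div_div_div_cancel_right₀ hE.ne',
    mul_div_mul_left _ _ (two_ne_zero)]
  exact ⟨rfl, rfl⟩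
end

section
/- Fix β > 0 and let M_{F_β}(p,q,π) = (1+β²) π p / (β² π + π p + (1−q)(1−π)) (the F_β-score). Then for all p, q, π ∈ (0,1), the ratio of partial derivatives satisfies ∂_q M_{F_β}(p,q,π) / ∂_p M_{F_β}(p,q,π) = p(1−π) / (β² π + (1−q)(1−π)). In particular, for β = 1 this ratio coincides with the corresponding ratio for the Jaccard similarity coefficient M_JAC(p,q,π) = πp / (1 − q(1−π)). -/
open Set

theorem fbeta_partial_ratio
    (β : ℝ) (hβ : 0 < β)
    (MF : ℝ → ℝ → ℝ → ℝ)
    (hMF : ∀ p q π : ℝ, MF p q π =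
      (1 + β ^ 2) * π * p / (β ^ 2 * π + π * p + (1 - q) * (1 - π)))
    (MJAC : ℝ → ℝ → ℝ → ℝ)
    (hMJAC : ∀ p q π : ℝ, MJAC p q π = π * p / (1 - q * (1 - π))) :
    ∀ p q π : ℝ, p ∈ Ioo (0:ℝ) 1 → q ∈ Ioo (0:ℝ) 1 → π ∈ Ioo (0:ℝ) 1 →
      deriv (fun q' => MF p q' π) q / deriv (fun p' => MF p' q π) p
          = p * (1 - π) / (β ^ 2 * π + (1 - q) * (1 - π)) ∧
      (β = 1 →
        deriv (fun q' => MF p q' π) q / deriv (fun p' => MF p' q π) p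
          = deriv (fun q' => MJAC p q' π) q / deriv (fun p' => MJAC p' q π) p) := by
  intro p q π ⟨hp0, hp1⟩ ⟨hq0, hq1⟩ ⟨hπ0, hπ1⟩
  simp only [hMF, hMJAC]
  have h1 : 0 < (1 - q) * (1 - π) := mul_pos (by linarith) (by linarith)
  have h2 : 0 < β ^ 2 * π := by positivity
  have h3 : 0 < π * p := by positivity
  have hE : 0 < β ^ 2 * π + (1 - q) * (1 - π) := by linarith
  have hD : 0 < β ^ 2 * π + π * p + (1 - q) * (1 - π) := by linarith
  have hJ : 0 < 1 - q * (1 - π) := by nlinarith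
  have dq : HasDerivAt (fun q' : ℝ => (1 + β ^ 2) * π * p / (β ^ 2 * π + π * p + (1 - q') * (1 - π)))
      ((1 + β ^ 2) * π * p * (1 - π) / (β ^ 2 * π + π * p + (1 - q) * (1 - π)) ^ 2) q := by
    have hd := (((hasDerivAt_id' q).const_sub 1).mul_const (1 - π)).const_add (β ^ 2 * π + π * p)
    refine HasDerivAt.congr_deriv ((hasDerivAt_const q ((1 + β ^ 2) * π * p)).fun_div hd hD.ne') ?_
    ring
  have dp : HasDerivAt (fun p' : ℝ => (1 + β ^ 2) * π * p' / (β ^ 2 * π + π * p' + (1 - q) * (1 - π)))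
      ((1 + β ^ 2) * π * (β ^ 2 * π + (1 - q) * (1 - π)) /
        (β ^ 2 * π + π * p + (1 - q) * (1 - π)) ^ 2) p := by
    have hd := (((hasDerivAt_id' p).const_mul π).const_add (β ^ 2 * π)).add_const ((1 - q) * (1 - π))
    refine HasDerivAt.congr_deriv (((hasDerivAt_id' p).const_mul ((1 + β ^ 2) * π)).fun_div hd hD.ne') ?_
    ring
  have jq : HasDerivAt (fun q' : ℝ => π * p / (1 - q' * (1 - π)))
      (π * p * (1 - π) / (1 - q * (1 - π)) ^ 2) q := by
    have hd := ((hasDerivAt_id' q).mul_const (1 - π)).const_sub 1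
    refine HasDerivAt.congr_deriv ((hasDerivAt_const q (π * p)).fun_div hd hJ.ne') ?_
    ring
  have jp : HasDerivAt (fun p' : ℝ => π * p' / (1 - q * (1 - π)))
      (π / (1 - q * (1 - π))) p := by
    refine HasDerivAt.congr_deriv (((hasDerivAt_id' p).const_mul π).div_const (1 - q * (1 - π))) ?_
    ring
  rw [dq.deriv, dp.deriv, jq.deriv, jp.deriv]
  have key : (1 + β ^ 2) * π * p * (1 - π) / (β ^ 2 * π + π * p + (1 - q) * (1 - π)) ^ 2 /
      ((1 + β ^ 2) * π * (β ^ 2 * π + (1 - q) * (1 - π)) /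
        (β ^ 2 * π + π * p + (1 - q) * (1 - π)) ^ 2)
      = p * (1 - π) / (β ^ 2 * π + (1 - q) * (1 - π)) := by
    have hb : 0 < (1 + β ^ 2) * π := by positivity
    rw [div_div_div_cancel_right₀ (pow_pos hD 2).ne', mul_assoc ((1 + β ^ 2) * π),
      mul_div_mul_left _ _ hb.ne']
  refine ⟨key, fun hb => ?_⟩
  rw [key, hb]
  have e : (1:ℝ) ^ 2 * π + (1 - q) * (1 - π) = 1 - q * (1 - π) := by ring
  rw [e]
  generalize 1 - q * (1 - π) = D at hJ
  have := hJ.ne'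
  have := hπ0.ne'
  field_simp
end

section
/- Let M_κ(p,q,π) = 2π(1−π)(p+q−1) / (2π(1−π)(p+q−1) − πp − (1−π)q + 1) (Cohen's kappa). Then for all p, q, π ∈ (0,1), the ratio of partial derivatives satisfies ∂_q M_κ(p,q,π) / ∂_p M_κ(p,q,π) = (p + π(1−2p)) / (1 − q − π(1−2q)). -/
open Set

theorem kappa_partial_ratio
    (M : ℝ → ℝ → ℝ → ℝ)
    (hM : ∀ p q π : ℝ, M p q π =
      2 * π * (1 - π) * (p + q - 1) /
      (2 * π * (1 - π) * (p + q - 1) - π * p - (1 - π) * q + 1)) :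
    ∀ p q π : ℝ, p ∈ Ioo (0:ℝ) 1 → q ∈ Ioo (0:ℝ) 1 → π ∈ Ioo (0:ℝ) 1 →
      deriv (fun q' => M p q' π) q / deriv (fun p' => M p' q π) p
        = (p + π * (1 - 2 * p)) / (1 - q - π * (1 - 2 * q)) := by
  rintro p q π ⟨hp0, hp1⟩ ⟨hq0, hq1⟩ ⟨hπ0, hπ1⟩
  have hp : 0 < 1 - p := by linarith
  have hq : 0 < 1 - q := by linarith
  have hπ : 0 < 1 - π := by linarith
  have hD : 0 < 2 * π * (1 - π) * (p + q - 1) - π * p - (1 - π) * q + 1 := by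
    have : 2 * π * (1 - π) * (p + q - 1) - π * p - (1 - π) * q + 1 =
      (1 - p) * (1 - q) * (π ^ 2 + (1 - π) ^ 2) + p * (1 - q) * (1 - π)
        + (1 - p) * q * π + p * q * (2 * π * (1 - π)) - 0 := by ring
    rw [this, sub_zero]
    positivity
  have hE : 0 < 1 - q - π * (1 - 2 * q) := by
    have : 1 - q - π * (1 - 2 * q) = (1 - π) * (1 - q) + π * q := by ring
    rw [this]
    positivity
  simp only [hM]
  have key : ∀ a b c d x : ℝ, c * x + d ≠ 0 →
      HasDerivAt (fun x : ℝ => (a * x + b) / (c * x + d))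
        ((a * (c * x + d) - (a * x + b) * c) / (c * x + d) ^ 2) x := by
    intro a b c d x h
    have h1 : ∀ a b : ℝ, HasDerivAt (fun x : ℝ => a * x + b) a x := by
      intro a b
      simpa using ((hasDerivAt_id x).const_mul a).add_const b
    exact (h1 a b).div (h1 c d) h
  have e1 : (2 * π * (1 - π) - (1 - π)) * q + (2 * π * (1 - π) * (p - 1) - π * p + 1)
      = 2 * π * (1 - π) * (p + q - 1) - π * p - (1 - π) * q + 1 := by ring
  have e2 : (2 * π * (1 - π) - π) * p + (2 * π * (1 - π) * (q - 1) - (1 - π) * q + 1)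
      = 2 * π * (1 - π) * (p + q - 1) - π * p - (1 - π) * q + 1 := by ring
  have d1 := (key (2 * π * (1 - π)) (2 * π * (1 - π) * (p - 1)) _ _ q
    (e1 ▸ hD.ne')).deriv
  have d2 := (key (2 * π * (1 - π)) (2 * π * (1 - π) * (q - 1)) _ _ p
    (e2 ▸ hD.ne')).deriv
  rw [e1] at d1
  rw [e2] at d2
  have f1 : (fun q' : ℝ => 2 * π * (1 - π) * (p + q' - 1) /
      (2 * π * (1 - π) * (p + q' - 1) - π * p - (1 - π) * q' + 1)) =
      fun x => (2 * π * (1 - π) * x + 2 * π * (1 - π) * (p - 1)) /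
      ((2 * π * (1 - π) - (1 - π)) * x + (2 * π * (1 - π) * (p - 1) - π * p + 1)) := by
    funext x
    congr 1 <;> ring
  have f2 : (fun p' : ℝ => 2 * π * (1 - π) * (p' + q - 1) /
      (2 * π * (1 - π) * (p' + q - 1) - π * p' - (1 - π) * q + 1)) =
      fun x => (2 * π * (1 - π) * x + 2 * π * (1 - π) * (q - 1)) /
      ((2 * π * (1 - π) - π) * x + (2 * π * (1 - π) * (q - 1) - (1 - π) * q + 1)) := by
    funext x
    congr 1 <;> ring
  rw [f1, f2, d1, d2, div_div_div_cancel_right₀ (pow_ne_zero 2 hD.ne')]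
  have hc : 2 * π * (1 - π) ≠ 0 := by positivity
  rw [← mul_div_mul_left (p + π * (1 - 2 * p)) (1 - q - π * (1 - 2 * q)) hc]
  congr 1 <;> ring
end

section
/- Let Σ be a symmetric positive definite n×n real matrix, μ₀ ≠ μ₁ ∈ ℝⁿ, let P_i be the multivariate normal measure on ℝⁿ with density f_i(x) = (2π)^{−n/2}(det Σ)^{−1/2} exp(−(x−μ_i)ᵀΣ⁻¹(x−μ_i)/2) with respect to Lebesgue measure, and set Δ = ((μ₁−μ₀)ᵀ Σ⁻¹ (μ₁−μ₀))^{1/2} > 0. Then for every δ > 0, the specificity and sensitivity of the density-ratio threshold classifier φ_δ(x) = 1(f₁(x)/f₀(x) > δ) satisfy P₀({x : f₁(x)/f₀(x) ≤ δ}) = Φ((log δ + Δ²/2)/Δ) and P₁({x : f₁(x)/f₀(x) > δ}) = Φ((−log δ + Δ²/2)/Δ), where Φ is the cumulative distribution function of the standard normal distribution N(0,1). -/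
open Matrix MeasureTheory Set

open ProbabilityTheory in
lemma lda_pi_gauss (n : ℕ) :
    Measure.pi (fun _ : Fin n => gaussianReal 0 1) =
      (volume : Measure (Fin n → ℝ)).withDensity (fun z => ENNReal.ofReal
        ((2 * Real.pi) ^ (-(n : ℝ) / 2) * Real.exp (-(z ⬝ᵥ z) / 2))) := by
  have hpdf : ∀ z : Fin n → ℝ, (2 * Real.pi) ^ (-(n : ℝ) / 2) * Real.exp (-(z ⬝ᵥ z) / 2)
      = ∏ i, gaussianPDFReal 0 1 (z i) := by
    intro z
    simp only [gaussianPDFReal_def, NNReal.coe_one, mul_one, sub_zero]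
    rw [Finset.prod_mul_distrib, ← Real.exp_sum, Finset.prod_const, Finset.card_univ,
      Fintype.card_fin, Real.sqrt_eq_rpow, ← Real.rpow_neg (by positivity),
      ← Real.rpow_natCast, ← Real.rpow_mul (by positivity), ← Finset.sum_div,
      Finset.sum_neg_distrib, dotProduct]
    congr 3
    · ring
    · simp [sq]
  simp_rw [hpdf]
  refine Measure.pi_eq fun s hs => ?_
  have hbox : MeasurableSet (Set.pi univ s) := MeasurableSet.univ_pi hs
  rw [withDensity_apply _ hbox, volume_pi, Measure.restrict_pi_pi]
  rw [← ofReal_integral_eq_lintegral_ofReal]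
  · rw [integral_fintype_prod_eq_prod (f := fun _ x => gaussianPDFReal 0 1 x),
      ENNReal.ofReal_prod_of_nonneg]
    · refine Finset.prod_congr rfl fun i _ => ?_
      rw [gaussianReal_apply_eq_integral _ (by simp)]
    · intro i _
      exact integral_nonneg fun x => gaussianPDFReal_nonneg _ _ _
  · exact Integrable.fintype_prod (f := fun _ x => gaussianPDFReal 0 1 x)
      fun i => (integrable_gaussianPDFReal 0 1).integrableOn
  · exact Filter.Eventually.of_forall fun x =>
      Finset.prod_nonneg fun i _ => gaussianPDFReal_nonneg _ _ _

open ProbabilityTheory in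
lemma lda_unit_dot {n : ℕ} (u : Fin n → ℝ) (hu : u ⬝ᵥ u = 1) :
    (Measure.pi (fun _ : Fin n => gaussianReal 0 1)).map (fun z => u ⬝ᵥ z) =
      gaussianReal 0 1 := by
  have hm : Measurable (fun z : Fin n → ℝ => u ⬝ᵥ z) := by
    simp only [dotProduct]; fun_prop
  have : IsProbabilityMeasure
    ((Measure.pi (fun _ : Fin n => gaussianReal 0 1)).map (fun z => u ⬝ᵥ z)) :=
    Measure.isProbabilityMeasure_map hm.aemeasurable
  apply Measure.ext_of_charFun
  ext t
  rw [charFun_apply_real, integral_map hm.aemeasurable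
    (Measurable.aestronglyMeasurable (by fun_prop))]
  have h : ∀ z : Fin n → ℝ, Complex.exp (t * ((u ⬝ᵥ z : ℝ) : ℂ) * Complex.I) =
      ∏ i, Complex.exp (((t * u i : ℝ) : ℂ) * (z i : ℂ) * Complex.I) := by
    intro z
    rw [← Complex.exp_sum, dotProduct, ← Finset.sum_mul]
    push_cast
    rw [Finset.mul_sum]
    simp only [mul_assoc]
  simp_rw [h]
  rw [integral_fintype_prod_eq_prod
    (f := fun i (x : ℝ) => Complex.exp (((t * u i : ℝ) : ℂ) * (x : ℂ) * Complex.I))]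
  simp_rw [← charFun_apply_real, charFun_gaussianReal]
  rw [← Complex.exp_sum]
  congr 1
  have hu' : ∑ i, ((u i : ℂ)) * (u i : ℂ) = 1 := by
    have := congrArg (fun r : ℝ => (r : ℂ)) hu
    simpa [dotProduct] using this
  have : ∀ i, (((t * u i : ℝ) : ℂ)) ^ 2 / 2 = (t : ℂ) ^ 2 / 2 * ((u i : ℂ) * (u i : ℂ)) := by
    intro i; push_cast; ring
  simp [-Complex.ofReal_mul, this, ← Finset.mul_sum, hu']

lemma lda_map_affine {n : ℕ} (S : Matrix (Fin n) (Fin n) ℝ) (hS : S.PosDef)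
    (B : Matrix (Fin n) (Fin n) ℝ) (hB : S = Bᵀ * B) (μ : Fin n → ℝ) :
    (volume : Measure (Fin n → ℝ)).withDensity (fun x => ENNReal.ofReal
      ((2 * Real.pi) ^ (-(n : ℝ) / 2) * S.det ^ (-(1 : ℝ) / 2) *
      Real.exp (-((x - μ) ⬝ᵥ (S⁻¹ *ᵥ (x - μ))) / 2))) =
    (Measure.pi (fun _ : Fin n => ProbabilityTheory.gaussianReal 0 1)).map
      (fun z => Bᵀ *ᵥ z + μ) := by
  have hdetS : S.det = B.det ^ 2 := by rw [hB, det_mul, det_transpose, sq]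
  have hB0 : B.det ≠ 0 := by
    intro h; have := hS.det_pos; rw [hdetS, h] at this; simp at this
  have hBT0 : (Bᵀ).det ≠ 0 := by rwa [det_transpose]
  have hU : IsUnit B.det := isUnit_iff_ne_zero.2 hB0
  have hUT : IsUnit (Bᵀ).det := isUnit_iff_ne_zero.2 hBT0
  have hquad : ∀ z : Fin n → ℝ, (Bᵀ *ᵥ z) ⬝ᵥ (S⁻¹ *ᵥ (Bᵀ *ᵥ z)) = z ⬝ᵥ z := by
    intro z
    rw [hB, Matrix.mul_inv_rev, mulVec_mulVec, Matrix.mul_assoc, nonsing_inv_mul _ hUT,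
      Matrix.mul_one, mulVec_transpose, ← dotProduct_mulVec, mulVec_mulVec, mul_nonsing_inv _ hU,
      one_mulVec]
  have hm1 : Measurable (fun z : Fin n → ℝ => Bᵀ *ᵥ z) :=
    (Continuous.matrix_mulVec continuous_const continuous_id).measurable
  have hm : Measurable (fun z : Fin n → ℝ => Bᵀ *ᵥ z + μ) := hm1.add_const μ
  have hvol : (volume : Measure (Fin n → ℝ)) =
      ENNReal.ofReal |B.det| • volume.map (fun z : Fin n → ℝ => Bᵀ *ᵥ z + μ) := by
    have h1 := Real.map_matrix_volume_pi_eq_smul_volume_pi hBT0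
    have h2 : (volume : Measure (Fin n → ℝ)).map (fun z : Fin n → ℝ => Bᵀ *ᵥ z + μ)
        = (volume.map (Matrix.toLin' Bᵀ)).map (fun x => x + μ) := by
      exact (Measure.map_map (measurable_add_const μ) hm1).symm
    rw [h2, h1, Measure.map_smul, map_add_right_eq_self, smul_smul,
      ← ENNReal.ofReal_mul (abs_nonneg _), det_transpose, abs_inv,
      mul_inv_cancel₀ (abs_ne_zero.2 hB0)]
    simp
  have hfm : Measurable (fun x : Fin n → ℝ => ENNReal.ofReal
      ((2 * Real.pi) ^ (-(n : ℝ) / 2) * S.det ^ (-(1 : ℝ) / 2) *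
      Real.exp (-((x - μ) ⬝ᵥ (S⁻¹ *ᵥ (x - μ))) / 2))) := by
    apply ENNReal.measurable_ofReal.comp
    apply Continuous.measurable
    have : Continuous fun x : Fin n → ℝ => (x - μ) ⬝ᵥ (S⁻¹ *ᵥ (x - μ)) :=
      Continuous.dotProduct (by fun_prop) (Continuous.matrix_mulVec continuous_const (by fun_prop))
    fun_prop
  have hcst : |B.det| * S.det ^ (-(1 : ℝ) / 2) = 1 := by
    rw [hdetS, ← sq_abs, ← Real.rpow_natCast, ← Real.rpow_mul (abs_nonneg _)]
    norm_num
    rw [Real.rpow_neg_one, mul_inv_cancel₀ (abs_ne_zero.2 hB0)]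
  ext s hs
  rw [Measure.map_apply hm hs, lda_pi_gauss, withDensity_apply _ hs, withDensity_apply _ (hm hs)]
  conv_lhs => rw [hvol]
  rw [Measure.restrict_smul, lintegral_smul_measure, setLIntegral_map hs hfm hm, smul_eq_mul,
    ← lintegral_const_mul' _ _ ENNReal.ofReal_ne_top]
  refine lintegral_congr fun z => ?_
  rw [← ENNReal.ofReal_mul (abs_nonneg _)]
  congr 1
  rw [add_sub_cancel_right, hquad]
  linear_combination ((2 * Real.pi) ^ (-(n : ℝ) / 2) * Real.exp (-(z ⬝ᵥ z) / 2)) * hcst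

lemma lda_proj {n : ℕ} (S : Matrix (Fin n) (Fin n) ℝ) (hS : S.PosDef)
    (μ w : Fin n → ℝ) (hw : w ⬝ᵥ (S *ᵥ w) = 1) :
    ((volume : Measure (Fin n → ℝ)).withDensity (fun x => ENNReal.ofReal
      ((2 * Real.pi) ^ (-(n : ℝ) / 2) * S.det ^ (-(1 : ℝ) / 2) *
      Real.exp (-((x - μ) ⬝ᵥ (S⁻¹ *ᵥ (x - μ))) / 2)))).map (fun x => w ⬝ᵥ (x - μ)) =
    ProbabilityTheory.gaussianReal 0 1 := by
  obtain ⟨B, hB⟩ : ∃ B : Matrix (Fin n) (Fin n) ℝ, S = Bᵀ * B := by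
    open scoped MatrixOrder in
    obtain ⟨B, hB⟩ := CStarAlgebra.nonneg_iff_eq_star_mul_self.mp hS.posSemidef.nonneg
    exact ⟨B, by simpa [star_eq_conjTranspose] using hB⟩
  have hm1 : Measurable (fun z : Fin n → ℝ => Bᵀ *ᵥ z) :=
    (Continuous.matrix_mulVec continuous_const continuous_id).measurable
  have hm2 : Measurable (fun x : Fin n → ℝ => w ⬝ᵥ (x - μ)) :=
    (Continuous.dotProduct continuous_const (by fun_prop)).measurable
  rw [lda_map_affine S hS B hB μ, Measure.map_map hm2 (hm1.add_const μ),
    show ((fun x : Fin n → ℝ => w ⬝ᵥ (x - μ)) ∘ fun z => Bᵀ *ᵥ z + μ) =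
      fun z => (B *ᵥ w) ⬝ᵥ z from ?_]
  · apply lda_unit_dot
    rw [← hw, hB, ← mulVec_mulVec, dotProduct_mulVec w, vecMul_transpose]
  · ext z
    simp only [Function.comp, add_sub_cancel_right]
    rw [dotProduct_mulVec, vecMul_transpose]

theorem lda_sensitivity_specificity
    {n : ℕ} (S : Matrix (Fin n) (Fin n) ℝ) (hS : S.PosDef)
    (μ₀ μ₁ : Fin n → ℝ) (hμ : μ₀ ≠ μ₁)
    (f₀ f₁ : (Fin n → ℝ) → ℝ)
    (hf₀ : ∀ x, f₀ x = (2 * Real.pi) ^ (-(n : ℝ) / 2) * S.det ^ (-(1 : ℝ) / 2) *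
      Real.exp (-((x - μ₀) ⬝ᵥ (S⁻¹ *ᵥ (x - μ₀))) / 2))
    (hf₁ : ∀ x, f₁ x = (2 * Real.pi) ^ (-(n : ℝ) / 2) * S.det ^ (-(1 : ℝ) / 2) *
      Real.exp (-((x - μ₁) ⬝ᵥ (S⁻¹ *ᵥ (x - μ₁))) / 2))
    (P₀ P₁ : Measure (Fin n → ℝ))
    (hP₀ : P₀ = volume.withDensity (fun x => ENNReal.ofReal (f₀ x)))
    (hP₁ : P₁ = volume.withDensity (fun x => ENNReal.ofReal (f₁ x)))
    (Δ : ℝ) (hΔ : Δ = Real.sqrt ((μ₁ - μ₀) ⬝ᵥ (S⁻¹ *ᵥ (μ₁ - μ₀))))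
    (Φ : ℝ → ℝ)
    (hΦ : ∀ t, Φ t = ((ProbabilityTheory.gaussianReal 0 1) (Iic t)).toReal)
    (δ : ℝ) (hδ : 0 < δ) :
    (P₀ {x | f₁ x / f₀ x ≤ δ}).toReal = Φ ((Real.log δ + Δ ^ 2 / 2) / Δ) ∧
    (P₁ {x | f₁ x / f₀ x > δ}).toReal = Φ ((-Real.log δ + Δ ^ 2 / 2) / Δ) := by
  set d := μ₁ - μ₀ with hd
  have hd0 : d ≠ 0 := sub_ne_zero.2 hμ.symm
  have hq : 0 < d ⬝ᵥ (S⁻¹ *ᵥ d) := by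
    have := hS.inv.dotProduct_mulVec_pos hd0
    simpa using this
  have hΔ0 : 0 < Δ := by rw [hΔ]; exact Real.sqrt_pos.2 hq
  have hΔ2 : d ⬝ᵥ (S⁻¹ *ᵥ d) = Δ ^ 2 := by rw [hΔ, Real.sq_sqrt hq.le]
  have hSU : IsUnit S.det := isUnit_iff_ne_zero.2 hS.det_pos.ne'
  have hsymm : ∀ a b : Fin n → ℝ, a ⬝ᵥ (S⁻¹ *ᵥ b) = b ⬝ᵥ (S⁻¹ *ᵥ a) := by
    intro a b
    have hT : (S⁻¹)ᵀ = S⁻¹ := by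
      have := hS.inv.isHermitian
      simpa [Matrix.IsHermitian] using this
    rw [dotProduct_mulVec, ← mulVec_transpose, hT, dotProduct_comm]
  set w := Δ⁻¹ • (S⁻¹ *ᵥ d) with hw
  have hw1 : w ⬝ᵥ (S *ᵥ w) = 1 := by
    rw [hw, mulVec_smul, mulVec_mulVec, mul_nonsing_inv _ hSU, one_mulVec, smul_dotProduct,
      dotProduct_smul, dotProduct_comm, hΔ2, smul_eq_mul, smul_eq_mul]
    field_simp
  have hw2 : (-w) ⬝ᵥ (S *ᵥ (-w)) = 1 := by
    rw [mulVec_neg, neg_dotProduct_neg, hw1]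
  have hwd : ∀ y, w ⬝ᵥ y = (y ⬝ᵥ (S⁻¹ *ᵥ d)) / Δ := by
    intro y
    rw [hw, smul_dotProduct, dotProduct_comm, smul_eq_mul]
    ring
  have hc : 0 < (2 * Real.pi) ^ (-(n : ℝ) / 2) * S.det ^ (-(1 : ℝ) / 2) :=
    mul_pos (by positivity) (Real.rpow_pos_of_pos hS.det_pos _)
  have hratio : ∀ x, f₁ x / f₀ x = Real.exp (Δ * (w ⬝ᵥ (x - μ₀)) - Δ ^ 2 / 2) := by
    intro x
    rw [hf₁, hf₀, mul_div_mul_left _ _ hc.ne', ← Real.exp_sub, hwd]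
    congr 1
    have h1 : x - μ₁ = (x - μ₀) - d := by rw [hd]; abel
    rw [h1, mulVec_sub, sub_dotProduct, dotProduct_sub, dotProduct_sub, hΔ2, hsymm d]
    field_simp
    ring
  have hw0 : w ⬝ᵥ d = Δ := by
    rw [hwd, hΔ2]; field_simp
  have hm : ∀ v μ : Fin n → ℝ, Measurable (fun x : Fin n → ℝ => v ⬝ᵥ (x - μ)) := fun v μ =>
    (Continuous.dotProduct continuous_const (by fun_prop)).measurable
  constructor
  · rw [hΦ, ← lda_proj S hS μ₀ w hw1, Measure.map_apply (hm _ _) measurableSet_Iic, hP₀]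
    simp_rw [hf₀]
    congr 2
    ext x
    simp only [mem_ofPred_eq, mem_preimage, mem_Iic]
    rw [← hf₀, hratio, ← Real.le_log_iff_exp_le hδ, le_div_iff₀ hΔ0]
    constructor <;> intro h <;> linarith
  · have : NullSingletonClass (ProbabilityTheory.gaussianReal 0 1) :=
      ProbabilityTheory.nullSingletonClass_gaussianReal (by simp)
    rw [hΦ, ← measure_congr (Iio_ae_eq_Iic (μ := ProbabilityTheory.gaussianReal 0 1)),
      ← lda_proj S hS μ₁ (-w) hw2, Measure.map_apply (hm _ _) measurableSet_Iio, hP₁]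
    simp_rw [hf₁]
    congr 2
    ext x
    simp only [mem_ofPred_eq, mem_preimage, mem_Iio]
    have h1 : x - μ₁ = (x - μ₀) - d := by rw [hd]; abel
    rw [← hf₁, hratio, gt_iff_lt, ← Real.log_lt_iff_lt_exp hδ, lt_div_iff₀ hΔ0, h1,
      neg_dotProduct, dotProduct_sub w (x - μ₀) d, hw0]
    constructor <;> intro h <;> nlinarith
end

section
/- In the LDA setting, let Δ > 0 and define π_{1|1}(δ) = Φ((−log δ + Δ²/2)/Δ) and π_{0|0}(δ) = Φ((log δ + Δ²/2)/Δ) for δ > 0, where Φ is the standard normal cumulative distribution function. Then δ = 1 solves the fixed-point equation for Yule's coefficients, namely δ = π_{1|1}(δ)(1 − π_{1|1}(δ)) / (π_{0|0}(δ)(1 − π_{0|0}(δ))); that is, the optimal Yule threshold in LDA equals 1 regardless of Δ and of the class proportion π. -/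
open Set

lemma gaussian_pos_of_volume (s : Set ℝ) (hs : MeasureTheory.volume s ≠ 0) :
    0 < ((ProbabilityTheory.gaussianReal 0 1) s).toReal := by
  refine ENNReal.toReal_pos (fun h => hs ?_) (MeasureTheory.measure_ne_top _ _)
  exact ProbabilityTheory.gaussianReal_absolutelyContinuous' 0 one_ne_zero h

theorem yule_optimal_threshold_one
    (Δ : ℝ) (hΔ : 0 < Δ)
    (Φ : ℝ → ℝ)
    (hΦ : ∀ t, Φ t = ((ProbabilityTheory.gaussianReal 0 1) (Iic t)).toReal)
    (p q : ℝ → ℝ)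
    (hp : ∀ δ : ℝ, p δ = Φ ((-Real.log δ + Δ ^ 2 / 2) / Δ))
    (hq : ∀ δ : ℝ, q δ = Φ ((Real.log δ + Δ ^ 2 / 2) / Δ)) :
    (1 : ℝ) = p 1 * (1 - p 1) / (q 1 * (1 - q 1)) := by
  have hpq : p 1 = q 1 := by rw [hp, hq]; simp
  have h0 : ∀ t, 0 < Φ t := fun t => by
    rw [hΦ]; exact gaussian_pos_of_volume _ (by simp)
  have h1 : ∀ t, 0 < 1 - Φ t := fun t => by
    have h := gaussian_pos_of_volume (Iic t)ᶜ (by simp)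
    have h2 := MeasureTheory.probReal_compl_eq_one_sub
      (μ := ProbabilityTheory.gaussianReal 0 1) (measurableSet_Iic (a := t))
    rw [hΦ]
    simp only [MeasureTheory.measureReal_def] at h2
    rwa [← h2]
  rw [hpq, div_self]
  rw [hq]
  exact (mul_pos (h0 _) (h1 _)).ne'
end

section
/- Fix c, d₁ ≥ 0 and d₀ > 0 with d₀ + d₁ − c > 0, fix β > 0, and define the robust F-score M_Frb(p,q,π) = ((d₀/π + β² + 1)/(1+c)) · (cπ + πp) / (d₀ + d₁π + πp + (1−q)(1−π)). Then for all p, q, π ∈ (0,1), the partial derivatives ∂_p M_Frb(p,q,π) and ∂_q M_Frb(p,q,π) are strictly positive. -/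
open Set

theorem robust_fscore_partials_pos
    (c d₀ d₁ : ℝ) (hc : 0 ≤ c) (hd₁ : 0 ≤ d₁) (hd₀ : 0 < d₀)
    (hsum : 0 < d₀ + d₁ - c) (β : ℝ) (hβ : 0 < β)
    (M : ℝ → ℝ → ℝ → ℝ)
    (hM : ∀ p q π : ℝ, M p q π =
      ((d₀ / π + β ^ 2 + 1) / (1 + c)) *
        ((c * π + π * p) / (d₀ + d₁ * π + π * p + (1 - q) * (1 - π)))) :
    ∀ p q π : ℝ, p ∈ Ioo (0:ℝ) 1 → q ∈ Ioo (0:ℝ) 1 → π ∈ Ioo (0:ℝ) 1 →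
      0 < deriv (fun p' => M p' q π) p ∧ 0 < deriv (fun q' => M p q' π) q := by
  rintro p q π ⟨hp0, hp1⟩ ⟨hq0, hq1⟩ ⟨hπ0, hπ1⟩
  have hK : 0 < (d₀ / π + β ^ 2 + 1) / (1 + c) := by positivity
  have h1π : 0 < 1 - π := by linarith
  have h1q : 0 < 1 - q := by linarith
  have hD : 0 < d₀ + d₁ * π + π * p + (1 - q) * (1 - π) := by positivity
  have hN : 0 < c * π + π * p := by positivity
  constructor
  · have hn : HasDerivAt (fun p' : ℝ => c * π + π * p') π p := by
      simpa using ((hasDerivAt_id p).const_mul π).const_add (c * π)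
    have hd : HasDerivAt
        (fun p' : ℝ => d₀ + d₁ * π + π * p' + (1 - q) * (1 - π)) π p := by
      simpa using (((hasDerivAt_id p).const_mul π).const_add
        (d₀ + d₁ * π)).add_const ((1 - q) * (1 - π))
    have h := (hn.fun_div hd hD.ne').const_mul ((d₀ / π + β ^ 2 + 1) / (1 + c))
    simp only [hM]
    rw [h.deriv]
    refine mul_pos hK (div_pos ?_ (by positivity))
    have h1 : 0 < π * ((1 - π) * d₀ + π * (d₀ + d₁ - c) + (1 - q) * (1 - π)) := by
      positivity
    linarith
  · have hn : HasDerivAt (fun _ : ℝ => c * π + π * p) 0 q := hasDerivAt_const _ _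
    have hd : HasDerivAt
        (fun q' : ℝ => d₀ + d₁ * π + π * p + (1 - q') * (1 - π)) (-(1 - π)) q := by
      simpa using ((((hasDerivAt_id q).const_sub 1).mul_const (1 - π)).const_add
        (d₀ + d₁ * π + π * p))
    have h := (hn.fun_div hd hD.ne').const_mul ((d₀ / π + β ^ 2 + 1) / (1 + c))
    simp only [hM]
    rw [h.deriv]
    refine mul_pos hK (div_pos ?_ (by positivity))
    have h1 : 0 < (c * π + π * p) * (1 - π) := by positivity
    linarith
end

section
/- Fix d > 0 and define the robust Matthews correlation coefficient M_MCCrb(p,q,π) = (d + π(1−π))^{1/2} · (pq − (1−p)(1−q)) / (d + (πp + (1−π)(1−q)) (π(1−p) + (1−π)q))^{1/2}. Then for all p, q, π ∈ (0,1), the ratio of partial derivatives satisfies ∂_q M_MCCrb(p,q,π) / ∂_p M_MCCrb(p,q,π) = ((2p−1)q − (q + p − 1)(2p − 1)π − p + 1 + 2d) / ((2q−1)(q + p − 1)π + 2q(1−q) + 2d). -/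
open Set

theorem robust_mcc_partial_ratio
    (d : ℝ) (hd : 0 < d)
    (M : ℝ → ℝ → ℝ → ℝ)
    (hM : ∀ p q π : ℝ, M p q π =
      Real.sqrt (d + π * (1 - π)) * (p * q - (1 - p) * (1 - q)) /
      Real.sqrt (d + (π * p + (1 - π) * (1 - q)) * (π * (1 - p) + (1 - π) * q))) :
    ∀ p q π : ℝ, p ∈ Ioo (0:ℝ) 1 → q ∈ Ioo (0:ℝ) 1 → π ∈ Ioo (0:ℝ) 1 →
      deriv (fun q' => M p q' π) q / deriv (fun p' => M p' q π) p
        = ((2 * p - 1) * q - (q + p - 1) * (2 * p - 1) * π - p + 1 + 2 * d) /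
          ((2 * q - 1) * (q + p - 1) * π + 2 * q * (1 - q) + 2 * d) := by
  intro p q π hp hq hπ
  obtain ⟨hp0, hp1⟩ := hp
  obtain ⟨hq0, hq1⟩ := hq
  obtain ⟨hπ0, hπ1⟩ := hπ
  have hD : 0 < d + (π * p + (1 - π) * (1 - q)) * (π * (1 - p) + (1 - π) * q) := by
    have h1 : 0 < 1 - p := by linarith
    have h2 : 0 < 1 - q := by linarith
    have h3 : 0 < 1 - π := by linarith
    positivity
  have hC : 0 < Real.sqrt (d + π * (1 - π)) := by
    have h3 : 0 < 1 - π := by linarith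
    positivity
  have key : ∀ (N D : ℝ → ℝ) (N' D' x : ℝ), HasDerivAt N N' x → HasDerivAt D D' x → 0 < D x →
      deriv (fun y => Real.sqrt (d + π * (1 - π)) * N y / Real.sqrt (D y)) x =
      (Real.sqrt (d + π * (1 - π)) / (2 * D x * Real.sqrt (D x))) * (2 * N' * D x - N x * D') := by
    intro N D N' D' x hN hD hx
    have hs : 0 < Real.sqrt (D x) := Real.sqrt_pos.mpr hx
    rw [((hN.const_mul (Real.sqrt (d + π * (1 - π)))).fun_div (hD.sqrt hx.ne') hs.ne').deriv]
    have h2 : Real.sqrt (D x) ^ 2 = D x := Real.sq_sqrt hx.le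
    generalize Real.sqrt (D x) = s at *
    rw [← h2]
    field_simp
  have hid := fun x : ℝ => hasDerivAt_id' x
  have hq' := key (fun y => p * y - (1 - p) * (1 - y))
    (fun y => d + (π * p + (1 - π) * (1 - y)) * (π * (1 - p) + (1 - π) * y)) _ _ q
    (((hid q).const_mul p).fun_sub (((hid q).const_sub 1).const_mul (1 - p)))
    ((((((hid q).const_sub 1).const_mul (1 - π)).const_add (π * p)).fun_mul
      (((hid q).const_mul (1 - π)).const_add (π * (1 - p)))).const_add d) hD
  have hp' := key (fun y => y * q - (1 - y) * (1 - q))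
    (fun y => d + (π * y + (1 - π) * (1 - q)) * (π * (1 - y) + (1 - π) * q)) _ _ p
    (((hid p).mul_const q).fun_sub (((hid p).const_sub 1).mul_const (1 - q)))
    (((((hid p).const_mul π).add_const ((1 - π) * (1 - q))).fun_mul
      ((((hid p).const_sub 1).const_mul π).add_const ((1 - π) * q))).const_add d) hD
  simp only [hM]
  rw [hq', hp', mul_div_mul_left _ _ (by positivity)]
  congr 1 <;> ring
end

section
/- Fix d > 0. Then for all p, q, π ∈ (0,1), ((2p−1)q − (q + p − 1)(2p − 1)π − p + 1 + 2d) / ((2q−1)(q + p − 1)π + 2q(1−q) + 2d) ≤ (1 + 2d)/(2d). Consequently, the robust Matthews correlation coefficient M_MCCrb satisfies the robustness condition (12) with constant c₂ = (1+2d)/(2d), i.e. its ratio of partial derivatives ∂_q M_MCCrb / ∂_p M_MCCrb is bounded by (1+2d)/(2d) for all π ∈ (0,1/2] and p, q ∈ (0,1). -/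
open Set

lemma aux_deriv (K : ℝ) (f g : ℝ → ℝ) (f' g' x : ℝ) (hf : HasDerivAt f f' x)
    (hg : HasDerivAt g g' x) (hpos : 0 < g x) :
    deriv (fun y => K * f y / Real.sqrt (g y)) x
      = K / (2 * g x * Real.sqrt (g x)) * (f' * (2 * g x) - f x * g') := by
  have hs : 0 < Real.sqrt (g x) := Real.sqrt_pos.mpr hpos
  have h := ((hf.const_mul K).div (hg.sqrt hpos.ne') hs.ne').deriv
  refine Eq.trans h ?_
  have h2 : Real.sqrt (g x) ^ 2 = g x := Real.sq_sqrt hpos.le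
  generalize Real.sqrt (g x) = s at *
  rw [← h2]
  field_simp

lemma aux_bound (d : ℝ) (hd : 0 < d) (p q π : ℝ) (hp : p ∈ Ioo (0:ℝ) 1)
    (hq : q ∈ Ioo (0:ℝ) 1) (hπ : π ∈ Ioo (0:ℝ) 1) :
    ((2 * p - 1) * q - (q + p - 1) * (2 * p - 1) * π - p + 1 + 2 * d) /
        ((2 * q - 1) * (q + p - 1) * π + 2 * q * (1 - q) + 2 * d)
        ≤ (1 + 2 * d) / (2 * d) := by
  obtain ⟨hp0, hp1⟩ := hp
  obtain ⟨hq0, hq1⟩ := hq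
  obtain ⟨h0, h1⟩ := hπ
  have hp1' := sub_pos.2 hp1
  have hq1' := sub_pos.2 hq1
  have h1' := sub_pos.2 h1
  have a1 : 0 < p * q + (1 - p) * (1 - q) := by positivity
  have a2 : 0 < p * (1 - q) + (1 - p) * q := by positivity
  have hD : 0 < (1 - π) * (2 * q * (1 - q)) + π * (p * q + (1 - p) * (1 - q)) := by positivity
  have hN : 0 ≤ (1 - π) * (p * (1 - q) + (1 - p) * q) + π * (p ^ 2 + (1 - p) ^ 2) := by
    positivity
  apply div_le_div₀
  · positivity
  · nlinarith
  · positivity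
  · nlinarith

theorem robust_mcc_robustness
    (d : ℝ) (hd : 0 < d)
    (M : ℝ → ℝ → ℝ → ℝ)
    (hM : ∀ p q π : ℝ, M p q π =
      Real.sqrt (d + π * (1 - π)) * (p * q - (1 - p) * (1 - q)) /
      Real.sqrt (d + (π * p + (1 - π) * (1 - q)) * (π * (1 - p) + (1 - π) * q))) :
    (∀ p q π : ℝ, p ∈ Ioo (0:ℝ) 1 → q ∈ Ioo (0:ℝ) 1 → π ∈ Ioo (0:ℝ) 1 →
      ((2 * p - 1) * q - (q + p - 1) * (2 * p - 1) * π - p + 1 + 2 * d) /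
        ((2 * q - 1) * (q + p - 1) * π + 2 * q * (1 - q) + 2 * d)
        ≤ (1 + 2 * d) / (2 * d)) ∧
    (∀ p q π : ℝ, p ∈ Ioo (0:ℝ) 1 → q ∈ Ioo (0:ℝ) 1 → π ∈ Ioc (0:ℝ) (1/2) →
      deriv (fun q' => M p q' π) q / deriv (fun p' => M p' q π) p
        ≤ (1 + 2 * d) / (2 * d)) := by
  refine ⟨aux_bound d hd, ?_⟩
  intro p q π hp hq hπ
  have hπ' : π ∈ Ioo (0:ℝ) 1 := ⟨hπ.1, by linarith [hπ.2]⟩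
  have hb := aux_bound d hd p q π hp hq hπ'
  obtain ⟨hp0, hp1⟩ := hp
  obtain ⟨hq0, hq1⟩ := hq
  obtain ⟨h0, h1⟩ := hπ'
  have hp1' := sub_pos.2 hp1
  have hq1' := sub_pos.2 hq1
  have h1' := sub_pos.2 h1
  have hG : 0 < d + (π * p + (1 - π) * (1 - q)) * (π * (1 - p) + (1 - π) * q) := by positivity
  have hK : 0 < Real.sqrt (d + π * (1 - π)) := Real.sqrt_pos.mpr (by positivity)
  have hS := Real.sqrt_pos.mpr hG
  simp only [hM]
  have hid := fun x : ℝ => hasDerivAt_id' x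
  have e1 := aux_deriv (Real.sqrt (d + π * (1 - π)))
    (fun q' => p * q' - (1 - p) * (1 - q'))
    (fun q' => d + (π * p + (1 - π) * (1 - q')) * (π * (1 - p) + (1 - π) * q'))
    _ _ q (((hid q).const_mul p).sub (((hid q).const_sub 1).const_mul (1 - p)))
    ((((((hid q).const_sub 1).const_mul (1 - π)).const_add (π * p)).mul
      (((hid q).const_mul (1 - π)).const_add (π * (1 - p)))).const_add d) hG
  have e2 := aux_deriv (Real.sqrt (d + π * (1 - π)))
    (fun p' => p' * q - (1 - p') * (1 - q))
    (fun p' => d + (π * p' + (1 - π) * (1 - q)) * (π * (1 - p') + (1 - π) * q))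
    _ _ p (((hid p).mul_const q).sub (((hid p).const_sub 1).mul_const (1 - q)))
    (((((hid p).const_mul π).add_const ((1 - π) * (1 - q))).mul
      ((((hid p).const_sub 1).const_mul π).add_const ((1 - π) * q))).const_add d) hG
  rw [e1, e2, mul_div_mul_left _ _ (by positivity)]
  refine le_trans (le_of_eq ?_) hb
  congr 1 <;> ring
end
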